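/- If (ǎ,p̌,V̌) is optimal for problem P2, then ǎ = 1_{y(p̌,V̌) > l} (i.e., ǎʲ = 1 iff yʲ(p̌,V̌) > lʲ), and consequently p̌ = y(p̌,V̌) ∧ l (componentwise minimum). -/

import Mathlib

open Matrix

/-!
At an admissible point `a j = 0` forces `y ≤ p` and `y ≤ l` in coordinate `j`, while `a j = 1`
forces `p j = l j`. An optimal point therefore has the claimed form unless it can be improved in
one coordinate: where `a j = 1` but `y j ≤ l j`, switching `a j` off stays admissible, and where
`a j = 0` but `y j < p j`, lowering `p j` to `y j` stays admissible because `y` is nonnegative and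
`x`, `y` are monotone in the payments. Both moves lower the objective.
-/

section Program

variable {ι R S : Type*} [Ring R] [LinearOrder R] [Preorder S]

/-- The feasible set of the mixed-integer clearing problem P2 for obligations `l`, with
`a` the 0–1 vector of banks paying in full, `p` the payments and `V` the equity values. The maps
`x` and `y`, values of a bank's assets without and with default costs, and the big-M constants
`κ` and `κ₁` are left arbitrary. -/
def IsAdmissible (x y : (ι → R) → (ι → R) → ι → R) (l : ι → R) (κ κ₁ : R)
    (a p V : ι → R) : Prop :=
  (∀ i, a i = 0 ∨ a i = 1) ∧ p ∈ Set.Icc 0 l ∧ 0 ≤ V ∧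
  (∀ i, y p V i - κ₁ * a i ≤ p i) ∧
  (∀ i, a i * l i ≤ p i) ∧
  (∀ i, y p V i ≤ (1 - a i) * l i + κ₁ * a i) ∧
  (∀ i, x p V i - l i - κ * (1 - a i) ≤ V i)

/-- The solutions of problem P2: admissible triples at which the objective `f` is minimal. -/
def IsOptimal (x y : (ι → R) → (ι → R) → ι → R) (l : ι → R) (κ κ₁ : R)
    (f : (ι → R) → (ι → R) → (ι → R) → S) (a p V : ι → R) : Prop :=
  IsAdmissible x y l κ κ₁ a p V ∧
    ∀ a' p' V', IsAdmissible x y l κ κ₁ a' p' V' → f a p V ≤ f a' p' V'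

variable {x y : (ι → R) → (ι → R) → ι → R} {l : ι → R} {κ κ₁ : R}
  {f : (ι → R) → (ι → R) → (ι → R) → S} {a p V : ι → R} {j : ι}

lemma IsAdmissible.le_payment_of_eq_zero (h : IsAdmissible x y l κ κ₁ a p V) (hj : a j = 0) :
    y p V j ≤ p j := by
  obtain ⟨-, -, -, hyp, -, -, -⟩ := h
  simpa [hj] using hyp j

lemma IsAdmissible.le_obligation_of_eq_zero (h : IsAdmissible x y l κ κ₁ a p V) (hj : a j = 0) :
    y p V j ≤ l j := by
  obtain ⟨-, -, -, -, -, hyl, -⟩ := h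
  simpa [hj] using hyl j

lemma IsAdmissible.payment_eq_of_eq_one (h : IsAdmissible x y l κ κ₁ a p V) (hj : a j = 1) :
    p j = l j := by
  obtain ⟨-, ⟨-, hpl⟩, -, -, hlp, -, -⟩ := h
  exact (hpl j).antisymm (by simpa [hj] using hlp j)

variable [IsStrictOrderedRing R]

lemma IsAdmissible.update_indicator [DecidableEq ι] (hκ : 0 ≤ κ)
    (h : IsAdmissible x y l κ κ₁ a p V) (hj : a j = 1) (hyl : y p V j ≤ l j) :
    IsAdmissible x y l κ κ₁ (Function.update a j 0) p V := by
  have hpj : p j = l j := h.payment_eq_of_eq_one hj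
  obtain ⟨ha, hp, hV, hyp, hlp, hyl', hxV⟩ := h
  have hxj : x p V j - l j ≤ V j := by simpa [hj] using hxV j
  refine ⟨fun i => ?_, hp, hV, fun i => ?_, fun i => ?_, fun i => ?_, fun i => ?_⟩ <;>
    rcases eq_or_ne i j with rfl | hij
  · simp
  · simpa [hij] using ha i
  · simpa [hpj] using hyl
  · simpa [hij] using hyp i
  · simpa using hp.1 i
  · simpa [hij] using hlp i
  · simpa using hyl
  · simpa [hij] using hyl' i
  · simpa using hxj.trans (le_add_of_nonneg_right hκ)
  · simpa [hij] using hxV i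

lemma IsAdmissible.update_payment [DecidableEq ι] (hx : Monotone fun q => x q V)
    (hy : Monotone fun q => y q V) (hy₀ : 0 ≤ y p V j)
    (h : IsAdmissible x y l κ κ₁ a p V) (hj : a j = 0) :
    IsAdmissible x y l κ κ₁ a (Function.update p j (y p V j)) V := by
  have hqp : Function.update p j (y p V j) ≤ p :=
    update_le_self_iff.2 (h.le_payment_of_eq_zero hj)
  obtain ⟨ha, ⟨hp, hpl⟩, hV, hyp, hlp, hyl, hxV⟩ := h
  refine ⟨ha, ⟨le_update_iff.2 ⟨hy₀, fun i _ => hp i⟩, hqp.trans hpl⟩, hV, fun i => ?_,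
    fun i => ?_, fun i => (hy hqp i).trans (hyl i), fun i => ?_⟩
  · have hyi := hy hqp i
    rcases eq_or_ne i j with rfl | hij
    · simpa [hj] using hyi
    · simpa [hij] using (sub_le_sub_right hyi _).trans (hyp i)
  · rcases eq_or_ne i j with rfl | hij
    · simpa [hj] using hy₀
    · simpa [hij] using hlp i
  · exact (sub_le_sub_right (sub_le_sub_right (hx hqp i) _) _).trans (hxV i)

lemma IsOptimal.obligation_lt_of_eq_one (hκ : 0 ≤ κ) (hf : StrictMono fun b => f b p V)
    (h : IsOptimal x y l κ κ₁ f a p V) (hj : a j = 1) : l j < y p V j := by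
  classical
  by_contra! hyl
  have hlt : Function.update a j 0 < a := update_lt_self_iff.2 (hj ▸ zero_lt_one)
  exact (hf hlt).not_ge (h.2 _ _ _ (h.1.update_indicator hκ hj hyl))

lemma IsOptimal.payment_eq_of_eq_zero (hx : Monotone fun q => x q V)
    (hy : Monotone fun q => y q V) (hy₀ : 0 ≤ y p V j) (hf : StrictMono fun q => f a q V)
    (h : IsOptimal x y l κ κ₁ f a p V) (hj : a j = 0) : p j = y p V j := by
  classical
  by_contra hne
  have hlt : Function.update p j (y p V j) < p :=
    update_lt_self_iff.2 ((h.1.le_payment_of_eq_zero hj).lt_of_ne' hne)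
  exact (hf hlt).not_ge (h.2 _ _ _ (h.1.update_payment hx hy hy₀ hj))

theorem stmt14_general (hκ : 0 ≤ κ) (hx : ∀ V, Monotone fun q => x q V)
    (hy : ∀ V, Monotone fun q => y q V) (hy₀ : ∀ p V, 0 ≤ p → 0 ≤ V → 0 ≤ y p V)
    (hfa : ∀ p V, StrictMono fun b => f b p V) (hfp : ∀ a V, StrictMono fun q => f a q V)
    (h : IsOptimal x y l κ κ₁ f a p V) :
    (a = fun j => if l j < y p V j then 1 else 0) ∧ p = fun j => min (y p V j) (l j) := by
  have ⟨ha, ⟨hp, _⟩, hV, _⟩ := h.1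
  refine ⟨funext fun j => ?_, funext fun j => ?_⟩ <;> rcases ha j with hj | hj
  · rw [hj, if_neg (h.1.le_obligation_of_eq_zero hj).not_gt]
  · rw [hj, if_pos (h.obligation_lt_of_eq_one hκ (hfa p V) hj)]
  · rw [min_eq_left (h.1.le_obligation_of_eq_zero hj)]
    exact h.payment_eq_of_eq_zero (hx V) (hy V) (hy₀ p V hp hV j) (hfp a V) hj
  · rw [min_eq_right (h.obligation_lt_of_eq_one hκ (hfa p V) hj).le]
    exact h.1.payment_eq_of_eq_one hj

end Program

section Affine

variable {ι R : Type*} [Fintype ι] [Semiring R]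

/-- The value of each bank's assets when the fractions `α`, `β`, `γ` of its external assets `e`,
interbank claims and equity holdings are recovered, with relative liabilities `P` and cross-holdings
`Th`. It is the paper's `y`, and its `x` when `α = β = γ = 1`. -/
def assetValue (α β γ : R) (e : ι → R) (P Th : Matrix ι ι R) (p V : ι → R) : ι → R :=
  fun i => α * e i + β * (Pᵀ *ᵥ p) i + γ * (Thᵀ *ᵥ V) i

/-- The linear objective of problem P2 with weights `f₁`, `f₂`, `f₃`. -/
def linearCost (f₁ f₂ f₃ a p V : ι → R) : R :=
  ∑ i, (f₁ i * a i + f₂ i * p i + f₃ i * V i)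

variable [PartialOrder R]

lemma monotone_mulVec [IsOrderedRing R] {A : Matrix ι ι R} (hA : ∀ i j, 0 ≤ A i j) :
    Monotone fun v => A *ᵥ v :=
  fun _ _ huv i => dotProduct_le_dotProduct_of_nonneg_left huv (hA i)

lemma mulVec_nonneg [IsOrderedRing R] {A : Matrix ι ι R} (hA : ∀ i j, 0 ≤ A i j) {v : ι → R}
    (hv : 0 ≤ v) : 0 ≤ A *ᵥ v :=
  fun i => dotProduct_nonneg_of_nonneg (hA i) hv

lemma monotone_assetValue [IsOrderedRing R] {α β γ : R} {e : ι → R} {P Th : Matrix ι ι R}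
    (hβ : 0 ≤ β) (hP : ∀ i j, 0 ≤ P i j) (V : ι → R) :
    Monotone fun p => assetValue α β γ e P Th p V := fun p q hpq i => by
  have hPpq : (Pᵀ *ᵥ p) i ≤ (Pᵀ *ᵥ q) i := monotone_mulVec (fun i j => hP j i) hpq i
  dsimp only [assetValue]
  gcongr

lemma assetValue_nonneg [IsOrderedRing R] {α β γ : R} {e : ι → R} {P Th : Matrix ι ι R}
    (hα : 0 ≤ α) (hβ : 0 ≤ β) (hγ : 0 ≤ γ) (he : 0 ≤ e) (hP : ∀ i j, 0 ≤ P i j)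
    (hTh : ∀ i j, 0 ≤ Th i j) (p V : ι → R) (hp : 0 ≤ p) (hV : 0 ≤ V) :
    0 ≤ assetValue α β γ e P Th p V := fun i =>
  add_nonneg
    (add_nonneg (mul_nonneg hα (he i)) (mul_nonneg hβ (mulVec_nonneg (fun i j => hP j i) hp i)))
    (mul_nonneg hγ (mulVec_nonneg (fun i j => hTh j i) hV i))

lemma strictMono_sum_mul [IsStrictOrderedRing R] {w : ι → R} (hw : ∀ i, 0 < w i) :
    StrictMono fun u : ι → R => ∑ i, w i * u i :=
  Fintype.sum_strictMono.comp fun _ _ huv =>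
    have ⟨hle, i, hlt⟩ := Pi.lt_def.1 huv
    Pi.lt_def.2 ⟨fun j => mul_le_mul_of_nonneg_left (hle j) (hw j).le, i,
      mul_lt_mul_of_pos_left hlt (hw i)⟩

lemma strictMono_linearCost_indicator [IsStrictOrderedRing R] {f₁ f₂ f₃ : ι → R}
    (hf₁ : ∀ i, 0 < f₁ i) (p V : ι → R) : StrictMono fun a => linearCost f₁ f₂ f₃ a p V := by
  simp only [linearCost, Finset.sum_add_distrib]
  exact ((strictMono_sum_mul hf₁).add_const _).add_const _

lemma strictMono_linearCost_payment [IsStrictOrderedRing R] {f₁ f₂ f₃ : ι → R}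
    (hf₂ : ∀ i, 0 < f₂ i) (a V : ι → R) : StrictMono fun p => linearCost f₁ f₂ f₃ a p V := by
  simp only [linearCost, Finset.sum_add_distrib]
  exact ((strictMono_sum_mul hf₂).const_add _).add_const _

end Affine

/-- If `(ǎ,p̌,V̌)` is optimal for problem P2, then
`ǎ = 1_{y(p̌,V̌) > l}` and consequently `p̌ = y(p̌,V̌) ∧ l`. -/
theorem stmt14 (N : ℕ) (hN : 1 < N)
    (e l : Fin N → ℝ) (he : 0 ≤ e) (hl : 0 ≤ l)
    (P Th : Matrix (Fin N) (Fin N) ℝ)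
    (hP : ∀ i j, 0 ≤ P i j) (hProw : ∀ i, ∑ j, P i j = 1)
    (hTh : ∀ i j, 0 ≤ Th i j) (hThrow : ∀ i, ∑ j, Th i j ≤ 1)
    (α β γ : ℝ) (hα : α ∈ Set.Icc (0:ℝ) 1) (hβ : β ∈ Set.Icc (0:ℝ) 1)
    (hγ : γ ∈ Set.Icc (0:ℝ) 1)
    (hInv : IsUnit (1 - Th.transpose))
    (hInvNonneg : ∀ i j, 0 ≤ (1 - Th.transpose)⁻¹ i j)
    (K : Fin N → ℝ)
    (hK : K = (1 - Th.transpose)⁻¹.mulVec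
      (fun i => max (e i + P.transpose.mulVec l i - l i) 0))
    (κ : ℝ) (hκ : κ = ⨆ i, K i)
    (κ₁ : ℝ) (hκ₁ : κ₁ = ⨆ i,
      (e i + P.transpose.mulVec l i + κ * Th.transpose.mulVec (fun _ => (1:ℝ)) i))
    (f₁ f₂ f₃ : Fin N → ℝ)
    (hf₁ : ∀ i, 0 < f₁ i) (hf₂ : ∀ i, 0 < f₂ i) (hf₃ : ∀ i, 0 < f₃ i)
    (f : (Fin N → ℝ) → (Fin N → ℝ) → (Fin N → ℝ) → ℝ)
    (hf : f = fun a p V => ∑ i, (f₁ i * a i + f₂ i * p i + f₃ i * V i))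
    (Adm2 : (Fin N → ℝ) → (Fin N → ℝ) → (Fin N → ℝ) → Prop)
    (hAdm2 : ∀ a p V : Fin N → ℝ, Adm2 a p V ↔
      ((∀ i, a i = 0 ∨ a i = 1) ∧ p ∈ Set.Icc (0 : Fin N → ℝ) l ∧ 0 ≤ V ∧
      (∀ i, α * e i + β * P.transpose.mulVec p i + γ * Th.transpose.mulVec V i
        - κ₁ * a i ≤ p i) ∧
      (∀ i, a i * l i ≤ p i) ∧
      (∀ i, α * e i + β * P.transpose.mulVec p i + γ * Th.transpose.mulVec V i
        ≤ (1 - a i) * l i + κ₁ * a i) ∧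
      (∀ i, e i + P.transpose.mulVec p i + Th.transpose.mulVec V i - l i
        - κ * (1 - a i) ≤ V i)))
    (acheck pcheck Vcheck : Fin N → ℝ)
    (hAdm : Adm2 acheck pcheck Vcheck)
    (hOpt : ∀ a p V : Fin N → ℝ, Adm2 a p V → f acheck pcheck Vcheck ≤ f a p V) :
    (acheck = fun j =>
      if l j < α * e j + β * P.transpose.mulVec pcheck j
        + γ * Th.transpose.mulVec Vcheck j then (1 : ℝ) else 0) ∧
    (pcheck = fun j =>
      min (α * e j + β * P.transpose.mulVec pcheck j
        + γ * Th.transpose.mulVec Vcheck j) (l j)) := by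
  have hκ₀ : 0 ≤ κ := by
    rw [hκ, hK]
    exact Real.iSup_nonneg (mulVec_nonneg hInvNonneg fun _ => le_max_right _ _)
  have hadm : Adm2 = IsAdmissible (assetValue 1 1 1 e P Th) (assetValue α β γ e P Th) l κ κ₁ := by
    ext a p V
    simpa only [IsAdmissible, assetValue, one_mul] using hAdm2 a p V
  subst hf hadm
  exact stmt14_general hκ₀ (monotone_assetValue zero_le_one hP) (monotone_assetValue hβ.1 hP)
    (assetValue_nonneg hα.1 hβ.1 hγ.1 he hP hTh) (strictMono_linearCost_indicator hf₁)
    (strictMono_linearCost_payment hf₂) ⟨hAdm, hOpt⟩
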